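/- Let r ∈ {4,5} and n ≥ r be integers, set k_2 = ⌈(C(r,2)−1)·C(n,2) / t_{r−1}(n)⌉. Let f be a k_2-weighting on the complete graph K_n on vertex set [n] such that no r-clique of K_n has weight sequence bound (1, 2, …, C(r,2)). Then Σ_e f(e) ≤ k_2·t_{r−1}(n). -/

import Mathlib

open Finset SimpleGraph

/-- `t_t(n)`: the number of edges of the Turán graph `T_t(n)`. -/
def turanE (t n : ℕ) : ℕ := (SimpleGraph.turanGraph n t).edgeFinset.card

/-- The `r`-clique `S` has weight sequence bound `(1, 2, …, C(r,2))` w.r.t. `f`. -/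
def HasWSB (n r : ℕ) (f : Sym2 (Fin n) → ℕ) (S : Finset (Fin n)) : Prop :=
  ∃ g : Fin (r.choose 2) → Sym2 (Fin n),
    Function.Injective g ∧
    (∀ i, ¬ (g i).IsDiag ∧ ∀ v ∈ g i, v ∈ S) ∧
    ∀ i : Fin (r.choose 2), (i : ℕ) + 1 ≤ f (g i)

/-- `k₂ = ⌈(C(r,2)−1)·C(n,2) / t_{r−1}(n)⌉`. -/
def kTwo (r n : ℕ) : ℕ :=
  ⌈(((r.choose 2 - 1) * n.choose 2 : ℕ) : ℚ) / ((turanE (r - 1) n : ℕ) : ℚ)⌉₊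

theorem turanE_add3 (n : ℕ) : turanE 3 (n+3) = turanE 3 n + 2 * n + 3 := by
  have h := card_edgeFinset_turanGraph_add (n := n) (r := 3)
  have h3 : Nat.choose 3 2 = 3 := by decide
  rw [h3] at h
  unfold turanE
  rw [h]; ring

theorem turanE_add4 (n : ℕ) : turanE 4 (n+4) = turanE 4 n + 3 * n + 6 := by
  have h := card_edgeFinset_turanGraph_add (n := n) (r := 4)
  have h3 : Nat.choose 4 2 = 6 := by decide
  rw [h3] at h
  unfold turanE
  rw [h]; ring

theorem turanE_step3 (n : ℕ) : turanE 3 (n+1) + n / 3 = turanE 3 n + n := by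
  induction n using Nat.strong_induction_on with
  | _ n ih =>
    by_cases h : n < 3
    · interval_cases n <;> simp [turanE, card_edgeFinset_turanGraph, Nat.choose]
    · obtain ⟨m, rfl⟩ : ∃ m, n = m + 3 := ⟨n - 3, by omega⟩
      have := ih m (by omega)
      have h1 := turanE_add3 (m+1)
      have h2 := turanE_add3 m
      rw [show m + 3 + 1 = m + 1 + 3 by ring]
      omega

theorem turanE_step4 (n : ℕ) : turanE 4 (n+1) + n / 4 = turanE 4 n + n := by
  induction n using Nat.strong_induction_on with
  | _ n ih =>
    by_cases h : n < 4
    · interval_cases n <;> simp [turanE, card_edgeFinset_turanGraph, Nat.choose]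
    · obtain ⟨m, rfl⟩ : ∃ m, n = m + 4 := ⟨n - 4, by omega⟩
      have := ih m (by omega)
      have h1 := turanE_add4 (m+1)
      have h2 := turanE_add4 m
      rw [show m + 4 + 1 = m + 1 + 4 by ring]
      omega

theorem turanE_closed3 (n q : ℕ) (hq : q = n / 3) : (2 : ℤ) * turanE 3 n =
    n * n - n - 2 * n * q + 3 * q * q + 3 * q := by
  induction n generalizing q with
  | zero => subst hq; simp [turanE, card_edgeFinset_turanGraph]
  | succ n ih =>
    have h := turanE_step3 n
    obtain ⟨p, hp⟩ : ∃ p, p = n / 3 := ⟨_, rfl⟩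
    have ih := ih p hp
    rw [← hp] at h
    have h' : (turanE 3 (n+1) : ℤ) + p = turanE 3 n + n := by exact_mod_cast h
    have hc : q = p ∨ (n = 3 * p + 2 ∧ q = p + 1) := by omega
    rcases hc with rfl | ⟨hn, rfl⟩
    · push_cast; linarith
    · have hn' : (n : ℤ) = 3 * p + 2 := by exact_mod_cast hn
      push_cast; rw [hn'] at h' ih ⊢; linarith

theorem turanE_low3 (n : ℕ) :
    (n : ℤ) * n - n + (n / 3 : ℕ) ≤ 2 * turanE 3 n + n * (n / 3 : ℕ) := by
  obtain ⟨q, hq⟩ : ∃ q, q = n / 3 := ⟨_, rfl⟩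
  have h := turanE_closed3 n q hq
  rw [h, ← hq]
  have h1 : (n : ℤ) ≤ 3 * q + 2 := by exact_mod_cast (by omega : n ≤ 3 * q + 2)
  have h2 : (0 : ℤ) ≤ q * (3 * q + 2 - n) := mul_nonneg (by positivity) (by linarith)
  linarith

theorem turanE_closed4 (n q : ℕ) (hq : q = n / 4) : (2 : ℤ) * turanE 4 n =
    n * n - n - 2 * n * q + 4 * q * q + 4 * q := by
  induction n generalizing q with
  | zero => subst hq; simp [turanE, card_edgeFinset_turanGraph]
  | succ n ih =>
    have h := turanE_step4 n
    obtain ⟨p, hp⟩ : ∃ p, p = n / 4 := ⟨_, rfl⟩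
    have ih := ih p hp
    rw [← hp] at h
    have h' : (turanE 4 (n+1) : ℤ) + p = turanE 4 n + n := by exact_mod_cast h
    have hc : q = p ∨ (n = 4 * p + 3 ∧ q = p + 1) := by omega
    rcases hc with rfl | ⟨hn, rfl⟩
    · push_cast; linarith
    · have hn' : (n : ℤ) = 4 * p + 3 := by exact_mod_cast hn
      push_cast; rw [hn'] at h' ih ⊢; linarith

theorem turanE_low4 (n : ℕ) :
    (n : ℤ) * n - n + (n / 4 : ℕ) ≤ 2 * turanE 4 n + n * (n / 4 : ℕ) := by
  obtain ⟨q, hq⟩ : ∃ q, q = n / 4 := ⟨_, rfl⟩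
  have h := turanE_closed4 n q hq
  rw [h, ← hq]
  have h1 : (n : ℤ) ≤ 4 * q + 3 := by exact_mod_cast (by omega : n ≤ 4 * q + 3)
  have h2 : (0 : ℤ) ≤ q * (4 * q + 3 - n) := mul_nonneg (by positivity) (by linarith)
  linarith

/-- one-step monotonicity of the hypothesis, abstractly -/
theorem H_step (c k n T T' q : ℕ) (hs : T' + q = T + n)
    (hl : (n : ℤ) * n - n + q ≤ 2 * T + n * q)
    (h : c * ((n+1) * n) ≤ 2 * k * T') : c * (n * (n - 1)) ≤ 2 * k * T := by
  rcases Nat.eq_zero_or_pos n with rfl | hn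
  · simp
  obtain ⟨m, rfl⟩ : ∃ m, n = m + 1 := ⟨n - 1, by omega⟩
  simp only [Nat.add_sub_cancel]
  zify at *
  have h1 : (T' : ℤ) = T + (m + 1) - q := by linarith
  rw [h1] at h
  have h2 : (m : ℤ) * (T + (m+1) - q) ≤ (m + 2) * T := by nlinarith
  have h3 : (m + 2 : ℤ) * (c * ((m+1) * m)) ≤ (m+2) * (2 * k * T) := by
    have : (m : ℤ) * (c * ((m+1+1) * (m+1))) ≤ m * (2 * k * (T + (m+1) - q)) :=
      mul_le_mul_of_nonneg_left h (by positivity)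
    have h4 : (2 * k : ℤ) * (m * (T + (m+1) - q)) ≤ 2 * k * ((m + 2) * T) :=
      mul_le_mul_of_nonneg_left h2 (by positivity)
    nlinarith
  exact le_of_mul_le_mul_left h3 (by positivity)

theorem H_mono (T : ℕ → ℕ) (c k : ℕ) (hstep : ∀ n, c * ((n+1) * (n + 1 - 1)) ≤ 2 * k * T (n+1) →
    c * (n * (n-1)) ≤ 2 * k * T n) (n m : ℕ) (hm : m ≤ n)
    (h : c * (n * (n-1)) ≤ 2 * k * T n) : c * (m * (m-1)) ≤ 2 * k * T m := by
  induction n, hm using Nat.le_induction with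
  | base => exact h
  | succ n hmn ih => exact ih (hstep n h)

theorem H_mono3 (c k n m : ℕ) (hm : m ≤ n)
    (h : c * (n * (n-1)) ≤ 2 * k * turanE 3 n) : c * (m * (m-1)) ≤ 2 * k * turanE 3 m :=
  H_mono (turanE 3) c k
    (fun n h => H_step c k n _ _ _ (turanE_step3 n) (turanE_low3 n) h) n m hm h

theorem H_mono4 (c k n m : ℕ) (hm : m ≤ n)
    (h : c * (n * (n-1)) ≤ 2 * k * turanE 4 n) : c * (m * (m-1)) ≤ 2 * k * turanE 4 m :=
  H_mono (turanE 4) c k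
    (fun n h => H_step c k n _ _ _ (turanE_step4 n) (turanE_low4 n) h) n m hm h

/-- Hall -/
theorem exists_order (m : ℕ) (a : Fin m → ℕ)
    (h : ∀ j, j < m → m - j ≤ ∑ i, if j + 1 ≤ a i then 1 else 0) :
    ∃ σ : Fin m → Fin m, Function.Injective σ ∧ ∀ i : Fin m, (i : ℕ) + 1 ≤ a (σ i) := by
  classical
  have := (Finset.all_card_le_biUnion_card_iff_exists_injective
    (fun i : Fin m => Finset.univ.filter (fun x => (i : ℕ) + 1 ≤ a x))).1 ?_
  · obtain ⟨σ, h1, h2⟩ := this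
    exact ⟨σ, h1, fun i => by simpa using h2 i⟩
  · intro s
    rcases s.eq_empty_or_nonempty with rfl | hs
    · simp
    · have hmin := s.min'_mem hs
      set i := s.min' hs with hi
      calc s.card ≤ (Finset.Ici i).card :=
            Finset.card_le_card (fun x hx => Finset.mem_Ici.2 (s.min'_le x hx))
        _ = m - i := by simp
        _ ≤ _ := h i i.2
        _ = (Finset.univ.filter (fun x => (i : ℕ) + 1 ≤ a x)).card := by
            rw [Finset.card_filter]
        _ ≤ _ := Finset.card_le_card (Finset.subset_biUnion_of_mem
            (fun i : Fin m => Finset.univ.filter (fun x => (i : ℕ) + 1 ≤ a x)) hmin)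

theorem wsb_of (n r m : ℕ) (hm : r.choose 2 = m) (f : Sym2 (Fin n) → ℕ) (v : Fin r → Fin n) (hv : Function.Injective v)
    (E : Fin m → Sym2 (Fin r)) (hE : Function.Injective E) (hd : ∀ i, ¬ (E i).IsDiag)
    (h : ∀ j, j < m →
      m - j ≤ ∑ i, if j + 1 ≤ f ((E i).map v) then 1 else 0) :
    ∃ S : Finset (Fin n), S.card = r ∧ HasWSB n r f S := by
  subst hm
  obtain ⟨σ, h1, h2⟩ := exists_order _ _ h
  refine ⟨Finset.univ.map ⟨v, hv⟩, by simp, fun i => (E (σ i)).map v, ?_, ?_, h2⟩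
  · exact (Sym2.map.injective hv).comp (hE.comp h1)
  · intro i
    refine ⟨?_, ?_⟩
    · have := hd (σ i)
      revert this
      dsimp only
      generalize E (σ i) = e
      induction e using Sym2.ind with
      | _ x y => simp [hv.eq_iff]
    · intro x hx
      rw [Sym2.mem_map] at hx
      obtain ⟨y, _, rfl⟩ := hx
      simp

section sums
variable {V : Type*} [DecidableEq V]

theorem sum_split (w : V → V → ℕ) (hs : ∀ x y, w x y = w y x) (U D : Finset V) (hD : D ⊆ U) :
    ∑ x ∈ U, ∑ y ∈ U, w x y = (∑ x ∈ U \ D, ∑ y ∈ U \ D, w x y)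
      + 2 * (∑ y ∈ U \ D, ∑ x ∈ D, w x y) + ∑ x ∈ D, ∑ y ∈ D, w x y := by
  have h1 : ∀ g : V → ℕ, ∑ x ∈ U, g x = ∑ x ∈ U \ D, g x + ∑ x ∈ D, g x :=
    fun g => (Finset.sum_sdiff hD).symm
  simp only [h1, Finset.sum_add_distrib]
  have h2 : ∑ x ∈ D, ∑ y ∈ U \ D, w x y = ∑ y ∈ U \ D, ∑ x ∈ D, w x y := Finset.sum_comm
  have h3 : ∑ x ∈ U \ D, ∑ y ∈ D, w x y = ∑ y ∈ U \ D, ∑ x ∈ D, w x y :=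
    Finset.sum_congr rfl fun x _ => Finset.sum_congr rfl fun y _ => hs x y
  omega

theorem sum_le (w : V → V → ℕ) (h0 : ∀ x, w x x = 0) (k : ℕ) (D : Finset V)
    (hk : ∀ x ∈ D, ∀ y ∈ D, w x y ≤ k) :
    ∑ x ∈ D, ∑ y ∈ D, w x y ≤ k * (D.card * (D.card - 1)) := by
  have : ∀ x ∈ D, ∑ y ∈ D, w x y ≤ (D.card - 1) * k := by
    intro x hx
    rw [← Finset.sum_erase_add D _ hx, h0, add_zero, ← Finset.card_erase_of_mem hx]
    exact Finset.sum_le_card_nsmul _ _ _ fun y hy => hk x hx y (Finset.mem_of_mem_erase hy)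
  calc _ ≤ D.card * ((D.card - 1) * k) := Finset.sum_le_card_nsmul _ _ _ this
    _ = _ := by ring

/-- Either a vertex sends a lot of weight to `D`, or the bound passes from `U \ D` to `U`. -/
theorem step (w : V → V → ℕ) (hs : ∀ x y, w x y = w y x) (h0 : ∀ x, w x x = 0) (k : ℕ)
    (hk : ∀ x y, w x y ≤ k) (U D : Finset V) (hD : D ⊆ U) (T T' B : ℕ)
    (hU : 2 * k * T < ∑ x ∈ U, ∑ y ∈ U, w x y)
    (hIH : ∑ x ∈ U \ D, ∑ y ∈ U \ D, w x y ≤ 2 * k * T')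
    (hT : 2 * k * T' + 2 * ((U.card - D.card) * B) + k * (D.card * (D.card - 1)) ≤ 2 * k * T) :
    ∃ y ∈ U, y ∉ D ∧ B < ∑ x ∈ D, w x y := by
  by_contra! hcon
  have h1 : ∑ y ∈ U \ D, ∑ x ∈ D, w x y ≤ (U \ D).card * B :=
    Finset.sum_le_card_nsmul _ _ _ fun y hy => hcon y (Finset.mem_sdiff.1 hy).1
      (Finset.mem_sdiff.1 hy).2
  rw [Finset.card_sdiff_of_subset hD] at h1
  have h2 := sum_le w h0 k D fun x _ y _ => hk x y
  have h3 := sum_split w hs U D hD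
  omega
end sums

theorem sum_edges (n : ℕ) (f : Sym2 (Fin n) → ℕ) :
    2 * ∑ e ∈ (⊤ : SimpleGraph (Fin n)).edgeFinset, f e =
      ∑ x, ∑ y, if x = y then 0 else f s(x, y) := by
  have h1 : (⊤ : SimpleGraph (Fin n)).edgeFinset =
      (Finset.univ : Finset (Fin n)).sym2.filter (fun e => ¬ e.IsDiag) := by
    ext e; induction e using Sym2.ind with
    | _ x y => simp
  have h2 : ∑ x : Fin n, ∑ y : Fin n, (if x < y then f s(x, y) else 0) =
      ∑ e ∈ (⊤ : SimpleGraph (Fin n)).edgeFinset, f e := by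
    rw [h1, Finset.sum_sym2_filter_not_isDiag, ← Finset.sum_product', ← Finset.sum_filter]
    refine Finset.sum_congr ?_ fun _ _ => rfl
    ext ⟨x, y⟩
    simp only [Finset.mem_filter, Finset.mem_product, Finset.mem_univ, Finset.mem_offDiag]
    constructor
    · rintro ⟨_, h⟩; exact ⟨⟨trivial, trivial, h.ne⟩, h⟩
    · rintro ⟨_, h⟩; exact ⟨⟨trivial, trivial⟩, h⟩
  have h3 : ∑ x : Fin n, ∑ y : Fin n, (if y < x then f s(x, y) else 0) =
      ∑ x : Fin n, ∑ y : Fin n, (if x < y then f s(x, y) else 0) := by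
    rw [Finset.sum_comm]
    refine Finset.sum_congr rfl fun x _ => Finset.sum_congr rfl fun y _ => ?_
    rw [Sym2.eq_swap]
  rw [← h2, two_mul]
  nth_rewrite 2 [← h3]
  simp only [← Finset.sum_add_distrib]
  refine Finset.sum_congr rfl fun x _ => Finset.sum_congr rfl fun y _ => ?_
  rcases lt_trichotomy x y with h | h | h
  · simp [h, h.ne, h.le.not_gt]
  · simp [h]
  · simp [h, h.ne', h.le.not_gt]

theorem num_ineq (s d c B k T T' : ℕ) (hB : (s + 1) * B ≤ d * s * k)
    (hT : 2 * (s + 1) * T' + 2 * s * d * c + (s + 1) * (d * (d - 1)) ≤ 2 * (s + 1) * T) :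
    2 * k * T' + 2 * (c * B) + k * (d * (d - 1)) ≤ 2 * k * T := by
  have h1 := Nat.mul_le_mul_left (2 * c) hB
  have h2 := Nat.mul_le_mul_left k hT
  refine le_of_mul_le_mul_left (a := s + 1) ?_ (Nat.succ_pos s)
  generalize d * (d - 1) = X at *
  nlinarith

theorem incr3 (d c : ℕ) (hd : d = 2 ∨ d = 3) : 2 * (2 + 1) * turanE 3 c + 2 * 2 * d * c
    + (2 + 1) * (d * (d - 1)) ≤ 2 * (2 + 1) * turanE 3 (c + d) := by
  have h1 := turanE_step3 c
  have h2 := turanE_step3 (c+1)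
  have h3 := turanE_step3 (c+1+1)
  rcases hd with rfl | rfl
  · have : 3 * (c / 3 + (c + 1) / 3) ≤ 2 * c := by
      clear h1 h2 h3
      have hq : c % 3 < 3 := Nat.mod_lt _ (by norm_num)
      have hq' := Nat.div_add_mod c 3
      generalize c / 3 = q at *
      generalize c % 3 = s at *
      subst hq'
      interval_cases s <;> omega
    clear h3
    rw [show c + 2 = c + 1 + 1 by ring]
    generalize c / 3 = q at *
    generalize (c + 1) / 3 = q' at *
    omega
  · rw [turanE_add3]; omega

theorem incr4 (d c : ℕ) (hd : d = 2 ∨ d = 3 ∨ d = 4) : 2 * (3 + 1) * turanE 4 c + 2 * 3 * d * c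
    + (3 + 1) * (d * (d - 1)) ≤ 2 * (3 + 1) * turanE 4 (c + d) := by
  have h1 := turanE_step4 c
  have h2 := turanE_step4 (c+1)
  have h3 := turanE_step4 (c+1+1)
  have h4 := turanE_step4 (c+1+1+1)
  rcases hd with rfl | rfl | rfl
  · have : 4 * (c / 4 + (c + 1) / 4) ≤ 2 * c := by
      clear h1 h2 h3 h4
      have hq : c % 4 < 4 := Nat.mod_lt _ (by norm_num)
      have hq' := Nat.div_add_mod c 4
      generalize c / 4 = q at *
      generalize c % 4 = s at *
      subst hq'
      interval_cases s <;> omega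
    rw [show c + 2 = c + 1 + 1 by ring]
    generalize c / 4 = q at *
    generalize (c + 1) / 4 = q' at *
    omega
  · have : 4 * (c / 4 + (c + 1) / 4 + (c + 1 + 1) / 4) ≤ 3 * c := by
      clear h1 h2 h3 h4
      have hq : c % 4 < 4 := Nat.mod_lt _ (by norm_num)
      have hq' := Nat.div_add_mod c 4
      generalize c / 4 = q at *
      generalize c % 4 = s at *
      subst hq'
      interval_cases s <;> omega
    rw [show c + 3 = c + 1 + 1 + 1 by ring]
    generalize c / 4 = q at *
    generalize (c + 1) / 4 = q' at *
    generalize (c + 1 + 1) / 4 = q'' at *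
    omega
  · rw [turanE_add4]; omega

/-- the weight function on ordered pairs, zero on the diagonal -/
def wt (n : ℕ) (f : Sym2 (Fin n) → ℕ) (x y : Fin n) : ℕ := if x = y then 0 else f s(x, y)

theorem wt_symm (n : ℕ) (f : Sym2 (Fin n) → ℕ) (x y : Fin n) : wt n f x y = wt n f y x := by
  unfold wt
  simp only [eq_comm (a := x), Sym2.eq_swap (a := x)]

theorem wt_self (n : ℕ) (f : Sym2 (Fin n) → ℕ) (x : Fin n) : wt n f x x = 0 := by simp [wt]

theorem wt_ne (n : ℕ) (f : Sym2 (Fin n) → ℕ) {x y : Fin n} (h : x ≠ y) :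
    f s(x, y) = wt n f x y := by simp [wt, h]

theorem wsb4 (n : ℕ) (f : Sym2 (Fin n) → ℕ) (u v w x : Fin n) (k : ℕ) (hk : 6 ≤ k)
    (hw : ∀ x y, wt n f x y ≤ k)
    (huv : u ≠ v) (huw : u ≠ w) (hvw : v ≠ w) (hux : u ≠ x) (hvx : v ≠ x) (hwx : w ≠ x)
    (h1 : 6 ≤ wt n f u v) (h2 : 4 * k < 3 * (wt n f u w + wt n f v w))
    (h3 : 2 * k < wt n f u x + wt n f v x + wt n f w x) :
    ∃ S : Finset (Fin n), S.card = 4 ∧ HasWSB n 4 f S := by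
  refine wsb_of n 4 6 (by decide) f ![u, v, w, x] ?_
    (![s(0,1), s(0,2), s(1,2), s(0,3), s(1,3), s(2,3)] : Fin 6 → Sym2 (Fin 4))
    (by intro i j; revert i j; decide) (by decide) ?_
  · intro i j
    fin_cases i <;> fin_cases j <;> simp [huv, huw, hvw, hux, hvx, hwx, huv.symm, huw.symm,
      hvw.symm, hux.symm, hvx.symm, hwx.symm]
  · intro j hj
    simp only [Fin.sum_univ_six]
    simp [wt_ne n f huv, wt_ne n f huw, wt_ne n f hvw, wt_ne n f hux, wt_ne n f hvx,
      wt_ne n f hwx]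
    have a2 := hw u w
    have a3 := hw v w
    have a4 := hw u x
    have a5 := hw v x
    have a6 := hw w x
    generalize wt n f u v = p1 at *
    generalize wt n f u w = p2 at *
    generalize wt n f v w = p3 at *
    generalize wt n f u x = p4 at *
    generalize wt n f v x = p5 at *
    generalize wt n f w x = p6 at *
    split_ifs <;> omega

theorem cnt2 (j k a b : ℕ) (ha : a ≤ k) (hb : b ≤ k)
    (h : 11 ≤ k ∧ 3 * k < 2 * (a + b) ∨ k = 10 ∧ 17 ≤ a + b) :
    (j < 6 → 2 ≤ (if j < a then 1 else 0) + (if j < b then 1 else 0)) ∧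
    (j < 9 → 1 ≤ (if j < a then 1 else 0) + (if j < b then 1 else 0)) := by
  split_ifs <;> omega

theorem cnt3 (j k a b c : ℕ) (ha : a ≤ k) (hb : b ≤ k) (hc : c ≤ k)
    (h : 11 ≤ k ∧ 9 * k < 4 * (a + b + c) ∨ k = 10 ∧ 26 ≤ a + b + c) :
    (j < 3 → 3 ≤ (if j < a then 1 else 0) + (if j < b then 1 else 0) + (if j < c then 1 else 0)) ∧
    (j < 7 → 2 ≤ (if j < a then 1 else 0) + (if j < b then 1 else 0) + (if j < c then 1 else 0)) ∧
    (j < 9 → 1 ≤ (if j < a then 1 else 0) + (if j < b then 1 else 0)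
      + (if j < c then 1 else 0)) := by
  split_ifs <;> omega

theorem cnt4 (j k a b c d : ℕ) (ha : a ≤ k) (hb : b ≤ k) (hc : c ≤ k) (hd : d ≤ k)
    (hk : 10 ≤ k) (h : 3 * k < a + b + c + d) :
    (j < 1 → 4 ≤ (if j < a then 1 else 0) + (if j < b then 1 else 0) + (if j < c then 1 else 0)
      + (if j < d then 1 else 0)) ∧
    (j < 6 → 3 ≤ (if j < a then 1 else 0) + (if j < b then 1 else 0) + (if j < c then 1 else 0)
      + (if j < d then 1 else 0)) ∧
    (j < 7 → 2 ≤ (if j < a then 1 else 0) + (if j < b then 1 else 0) + (if j < c then 1 else 0)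
      + (if j < d then 1 else 0)) ∧
    (j < 8 → 1 ≤ (if j < a then 1 else 0) + (if j < b then 1 else 0) + (if j < c then 1 else 0)
      + (if j < d then 1 else 0)) := by
  split_ifs <;> omega

theorem wsb5 (n : ℕ) (f : Sym2 (Fin n) → ℕ) (u v w x y : Fin n) (k : ℕ) (hk : 10 ≤ k)
    (hw : ∀ x y, wt n f x y ≤ k)
    (huv : u ≠ v) (huw : u ≠ w) (hvw : v ≠ w) (hux : u ≠ x) (hvx : v ≠ x) (hwx : w ≠ x)
    (huy : u ≠ y) (hvy : v ≠ y) (hwy : w ≠ y) (hxy : x ≠ y)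
    (h1 : 10 ≤ wt n f u v)
    (h2 : 11 ≤ k ∧ 3 * k < 2 * (wt n f u w + wt n f v w) ∨ k = 10 ∧ 17 ≤ wt n f u w + wt n f v w)
    (h3 : 11 ≤ k ∧ 9 * k < 4 * (wt n f u x + wt n f v x + wt n f w x) ∨
      k = 10 ∧ 26 ≤ wt n f u x + wt n f v x + wt n f w x)
    (h4 : 3 * k < wt n f u y + wt n f v y + wt n f w y + wt n f x y) :
    ∃ S : Finset (Fin n), S.card = 5 ∧ HasWSB n 5 f S := by
  refine wsb_of n 5 10 (by decide) f ![u, v, w, x, y] ?_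
    (![s(0,1), s(0,2), s(1,2), s(0,3), s(1,3), s(2,3), s(0,4), s(1,4), s(2,4), s(3,4)] :
      Fin 10 → Sym2 (Fin 5))
    (by intro i j; revert i j; decide) (by decide) ?_
  · intro i j
    fin_cases i <;> fin_cases j <;> simp [huv, huw, hvw, hux, hvx, hwx, huv.symm, huw.symm,
      hvw.symm, hux.symm, hvx.symm, hwx.symm, huy, hvy, hwy, hxy, huy.symm, hvy.symm, hwy.symm,
      hxy.symm]
  · intro j hj
    simp only [Fin.sum_univ_succ]
    simp [wt_ne n f huv, wt_ne n f huw, wt_ne n f hvw, wt_ne n f hux, wt_ne n f hvx,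
      wt_ne n f hwx, wt_ne n f huy, wt_ne n f hvy, wt_ne n f hwy, wt_ne n f hxy]
    have c1 : j < 10 → 1 ≤ if j < wt n f u v then 1 else 0 := by
      intro h; rw [if_pos (by omega)]
    have c2 := cnt2 j k _ _ (hw _ _) (hw _ _) h2
    have c3 := cnt3 j k _ _ _ (hw _ _) (hw _ _) (hw _ _) h3
    have c4 := cnt4 j k _ _ _ _ (hw _ _) (hw _ _) (hw _ _) (hw _ _) hk h4
    generalize (if j < wt n f u v then 1 else 0) = z1 at *
    generalize (if j < wt n f u w then 1 else 0) = z2 at *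
    generalize (if j < wt n f v w then 1 else 0) = z3 at *
    generalize (if j < wt n f u x then 1 else 0) = z4 at *
    generalize (if j < wt n f v x then 1 else 0) = z5 at *
    generalize (if j < wt n f w x then 1 else 0) = z6 at *
    generalize (if j < wt n f u y then 1 else 0) = z7 at *
    generalize (if j < wt n f v y then 1 else 0) = z8 at *
    generalize (if j < wt n f w y then 1 else 0) = z9 at *
    generalize (if j < wt n f x y then 1 else 0) = z10 at *
    clear h1 h2 h3 h4 hk
    interval_cases j <;> simp at c1 c2 c3 c4 <;> omega

theorem main4 (n : ℕ) (f : Sym2 (Fin n) → ℕ) (k : ℕ) (hk : 6 ≤ k)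
    (hw : ∀ x y, wt n f x y ≤ k) 
    (hwsb : ∀ S : Finset (Fin n), S.card = 4 → ¬ HasWSB n 4 f S) (m : ℕ) :
    ∀ U : Finset (Fin n), U.card = m → 5 * (m * (m - 1)) ≤ 2 * k * turanE 3 m →
      ∑ x ∈ U, ∑ y ∈ U, wt n f x y ≤ 2 * k * turanE 3 m := by
  induction m using Nat.strong_induction_on with
  | _ m ih =>
    intro U hU hH
    by_contra! hlt
    have key : ∀ D ⊆ U, ∀ d, D.card = d → (d = 2 ∨ d = 3) → ∀ B, 3 * B ≤ d * 2 * k →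
        ∃ y ∈ U, y ∉ D ∧ B < ∑ x ∈ D, wt n f x y := by
      intro D hD d hd hd' B hB
      have hle := Finset.card_le_card hD
      obtain ⟨c, hc⟩ : ∃ c, m = c + d := ⟨m - d, by omega⟩
      refine step (wt n f) (wt_symm n f) (wt_self n f) k hw U D hD (turanE 3 m) (turanE 3 c) B
        hlt ?_ ?_
      · refine ih c (by omega) (U \ D) ?_ (H_mono3 5 k m c (by omega) hH)
        rw [Finset.card_sdiff_of_subset hD]; omega
      · rw [hU, hd, show m - d = c by omega, hc]
        exact num_ineq 2 d c B k _ _ hB (incr3 d c hd')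
    obtain ⟨u, hu, v, hv, h1⟩ : ∃ u ∈ U, ∃ v ∈ U, 6 ≤ wt n f u v := by
      by_contra! hcon
      have := sum_le (wt n f) (wt_self n f) 5 U fun x hx y hy => by
        have := hcon x hx y hy; omega
      rw [hU] at this; omega
    have huv : u ≠ v := by
      rintro rfl; rw [wt_self] at h1; omega
    obtain ⟨w, hwU, hwD, h2⟩ := key {u, v} (by grind) 2 (by simp [huv]) (by simp)
      (4 * k / 3) (by omega)
    simp only [Finset.mem_insert, Finset.mem_singleton, not_or] at hwD
    obtain ⟨huw, hvw⟩ := hwD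
    rw [Finset.sum_pair huv] at h2
    obtain ⟨x, hxU, hxD, h3⟩ := key {u, v, w} (by grind) 3
      (Finset.card_eq_three.2 ⟨u, v, w, huv, Ne.symm huw, Ne.symm hvw, rfl⟩) (by simp)
      (2 * k) (by omega)
    simp only [Finset.mem_insert, Finset.mem_singleton, not_or] at hxD
    obtain ⟨hux, hvx, hwx⟩ := hxD
    rw [Finset.sum_insert (by grind), Finset.sum_pair (by grind)] at h3
    obtain ⟨S, hS, hS'⟩ := wsb4 n f u v w x k hk hw huv (Ne.symm huw) (Ne.symm hvw) (Ne.symm hux)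
      (Ne.symm hvx) (Ne.symm hwx) h1 (by omega) (by omega)
    exact hwsb S hS hS'

set_option maxHeartbeats 1000000 in
/-- the common final part for `r = 5`. -/
theorem build5 (n : ℕ) (f : Sym2 (Fin n) → ℕ) (k : ℕ) (hk : 10 ≤ k)
    (hw : ∀ x y, wt n f x y ≤ k)
    (hwsb : ∀ S : Finset (Fin n), S.card = 5 → ¬ HasWSB n 5 f S) (U : Finset (Fin n))
    (hlt : 9 * (U.card * (U.card - 1)) < ∑ x ∈ U, ∑ y ∈ U, wt n f x y)
    (B2 B3 : ℕ) (hB : 11 ≤ k ∧ B2 = 3 * k / 2 ∧ B3 = 9 * k / 4 ∨ k = 10 ∧ B2 = 16 ∧ B3 = 25)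
    (key : ∀ D ⊆ U, ∀ d B, D.card = d → (d = 2 ∧ B = B2 ∨ d = 3 ∧ B = B3 ∨ d = 4 ∧ B = 3 * k) →
        ∃ y ∈ U, y ∉ D ∧ B < ∑ x ∈ D, wt n f x y) : False := by
  obtain ⟨u, hu, v, hv, h1⟩ : ∃ u ∈ U, ∃ v ∈ U, 10 ≤ wt n f u v := by
    by_contra! hcon
    have := sum_le (wt n f) (wt_self n f) 9 U fun x hx y hy => by
      have := hcon x hx y hy; omega
    omega
  have huv : u ≠ v := by
    rintro rfl; rw [wt_self] at h1; omega
  obtain ⟨w, hwU, hwD, h2⟩ := key {u, v} (by grind) 2 _ (by simp [huv]) (.inl ⟨rfl, rfl⟩)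
  simp only [Finset.mem_insert, Finset.mem_singleton, not_or] at hwD
  obtain ⟨huw, hvw⟩ := hwD
  rw [Finset.sum_pair huv] at h2
  obtain ⟨x, hxU, hxD, h3⟩ := key {u, v, w} (by grind) 3 _
    (Finset.card_eq_three.2 ⟨u, v, w, huv, Ne.symm huw, Ne.symm hvw, rfl⟩)
    (.inr (.inl ⟨rfl, rfl⟩))
  simp only [Finset.mem_insert, Finset.mem_singleton, not_or] at hxD
  obtain ⟨hux, hvx, hwx⟩ := hxD
  rw [Finset.sum_insert (by grind), Finset.sum_pair (by grind)] at h3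
  obtain ⟨y, hyU, hyD, h4⟩ := key {u, v, w, x} (by grind) 4 _
    (by rw [Finset.card_insert_of_notMem (by grind), Finset.card_insert_of_notMem (by grind),
          Finset.card_pair (by grind)])
    (.inr (.inr ⟨rfl, rfl⟩))
  simp only [Finset.mem_insert, Finset.mem_singleton, not_or] at hyD
  obtain ⟨huy, hvy, hwy, hxy⟩ := hyD
  rw [Finset.sum_insert (by grind), Finset.sum_insert (by grind), Finset.sum_pair (by grind)] at h4
  obtain ⟨S, hS, hS'⟩ := wsb5 n f u v w x y k hk hw huv (Ne.symm huw) (Ne.symm hvw) (Ne.symm hux)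
    (Ne.symm hvx) (Ne.symm hwx) (Ne.symm huy) (Ne.symm hvy) (Ne.symm hwy) (Ne.symm hxy)
    h1 (by omega) (by omega) (by omega)
  exact hwsb S hS hS'

theorem main5 (n : ℕ) (f : Sym2 (Fin n) → ℕ) (k : ℕ) (hk : 11 ≤ k)
    (hw : ∀ x y, wt n f x y ≤ k)
    (hwsb : ∀ S : Finset (Fin n), S.card = 5 → ¬ HasWSB n 5 f S) (m : ℕ) :
    ∀ U : Finset (Fin n), U.card = m → 9 * (m * (m - 1)) ≤ 2 * k * turanE 4 m →
      ∑ x ∈ U, ∑ y ∈ U, wt n f x y ≤ 2 * k * turanE 4 m := by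
  induction m using Nat.strong_induction_on with
  | _ m ih =>
    intro U hU hH
    by_contra! hlt
    refine build5 n f k (by omega) hw hwsb U (by rw [hU]; omega) _ _ (.inl ⟨hk, rfl, rfl⟩) ?_
    intro D hD d B hd hd'
    have hle := Finset.card_le_card hD
    obtain ⟨c, hc⟩ : ∃ c, m = c + d := ⟨m - d, by omega⟩
    refine step (wt n f) (wt_symm n f) (wt_self n f) k hw U D hD (turanE 4 m) (turanE 4 c) B
      hlt ?_ ?_
    · refine ih c (by omega) (U \ D) ?_ (H_mono4 9 k m c (by omega) hH)
      rw [Finset.card_sdiff_of_subset hD]; omega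
    · rw [hU, hd, show m - d = c by omega, hc]
      refine num_ineq 3 d c B k _ _ ?_ (incr4 d c (by omega))
      rcases hd' with ⟨rfl, rfl⟩ | ⟨rfl, rfl⟩ | ⟨rfl, rfl⟩ <;> omega

theorem main5_small (f : Sym2 (Fin 5) → ℕ)
    (hw : ∀ x y, wt 5 f x y ≤ 10)
    (hwsb : ∀ S : Finset (Fin 5), S.card = 5 → ¬ HasWSB 5 5 f S) :
      ∑ x, ∑ y, wt 5 f x y ≤ 2 * 10 * 9 := by
  by_contra! hlt
  refine build5 5 f 10 le_rfl hw hwsb univ (by simpa using hlt) 16 25 (.inr ⟨rfl, rfl, rfl⟩) ?_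
  intro D hD d B hd hd'
  have hle := Finset.card_le_card hD
  simp only [Finset.card_univ, Fintype.card_fin] at hle
  have hb := sum_le (wt 5 f) (wt_self 5 f) 10 (univ \ D) fun x _ y _ => hw x y
  rw [Finset.card_sdiff_of_subset hD, hd] at hb
  simp only [Finset.card_univ, Fintype.card_fin] at hb
  have key := fun T' h1 h2 => step (wt 5 f) (wt_symm 5 f) (wt_self 5 f) 10 hw univ D hD 9 T' B hlt h1 h2
  rw [hd] at key
  simp only [Finset.card_univ, Fintype.card_fin] at key
  rcases hd' with ⟨rfl, rfl⟩ | ⟨rfl, rfl⟩ | ⟨rfl, rfl⟩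
  · exact key 3 (by omega) (by norm_num)
  · exact key 1 (by omega) (by norm_num)
  · exact key 0 (by omega) (by norm_num)

theorem kTwo_spec (r n : ℕ) (hT : 0 < turanE (r - 1) n) :
    (r.choose 2 - 1) * (n * (n - 1)) ≤ 2 * kTwo r n * turanE (r - 1) n := by
  have h : ((((r.choose 2 - 1) * n.choose 2 : ℕ) : ℚ) / ((turanE (r - 1) n : ℕ) : ℚ)) ≤ kTwo r n :=
    Nat.le_ceil _
  rw [div_le_iff₀ (by exact_mod_cast hT)] at h
  have h' : (r.choose 2 - 1) * n.choose 2 ≤ kTwo r n * turanE (r - 1) n := by exact_mod_cast h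
  have h2 : n.choose 2 * 2 = n * (n - 1) := by
    rw [Nat.choose_two_right]; exact Nat.div_mul_cancel (Nat.even_mul_pred_self n).two_dvd
  rw [← h2]
  nlinarith

theorem turanE_vals : turanE 3 4 = 5 ∧ turanE 4 5 = 9 ∧ turanE 4 6 = 13 := by
  simp [turanE, card_edgeFinset_turanGraph, Nat.choose]

/-- Conjecture 2.2 (ii) for `r ∈ {4,5}`: if `f` is a `k₂`-weighting on `K_n` such that no
`r`-clique has weight sequence bound `(1, …, C(r,2))`, then `Σ_e f(e) ≤ k₂·t_{r−1}(n)`. -/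
theorem weighted_bound_k2 (r n : ℕ) (hr : r = 4 ∨ r = 5) (hn : r ≤ n)
    (f : Sym2 (Fin n) → ℕ)
    (hf : ∀ e : Sym2 (Fin n), ¬ e.IsDiag → f e ≤ kTwo r n)
    (hwsb : ∀ S : Finset (Fin n), S.card = r → ¬ HasWSB n r f S) :
    ∑ e ∈ (⊤ : SimpleGraph (Fin n)).edgeFinset, f e ≤ kTwo r n * turanE (r - 1) n := by
  have hw : ∀ x y, wt n f x y ≤ kTwo r n := by
    intro x y
    unfold wt
    split_ifs with h
    · omega
    · exact hf _ (by simpa using h)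
  have hsum := sum_edges n f
  change _ = ∑ x, ∑ y, wt n f x y at hsum
  suffices h : ∑ x, ∑ y, wt n f x y ≤ 2 * kTwo r n * turanE (r - 1) n by
    rw [mul_assoc] at h; omega
  obtain ⟨v1, v2, v3⟩ := turanE_vals
  rcases hr with rfl | rfl
  · have hpos : 0 < turanE 3 n := by
      have : ∀ m, 4 ≤ m → 0 < turanE 3 m := by
        intro m hm
        induction m, hm using Nat.le_induction with
        | base => omega
        | succ m hm ih => have := turanE_step3 m; omega
      exact this n hn
    have hH : 5 * (n * (n - 1)) ≤ 2 * kTwo 4 n * turanE 3 n := kTwo_spec 4 n hpos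
    have h4 := H_mono3 5 (kTwo 4 n) n 4 hn hH
    rw [v1] at h4
    exact main4 n f _ (by omega) hw hwsb n univ (by simp) hH
  · have hpos : 0 < turanE 4 n := by
      have : ∀ m, 5 ≤ m → 0 < turanE 4 m := by
        intro m hm
        induction m, hm using Nat.le_induction with
        | base => omega
        | succ m hm ih => have := turanE_step4 m; omega
      exact this n hn
    have hH : 9 * (n * (n - 1)) ≤ 2 * kTwo 5 n * turanE 4 n := kTwo_spec 5 n hpos
    by_cases hk : 11 ≤ kTwo 5 n
    · exact main5 n f _ hk hw hwsb n univ (by simp) hH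
    · have h5 := H_mono4 9 (kTwo 5 n) n 5 hn hH
      rw [v2] at h5
      have hk10 : kTwo 5 n = 10 := by omega
      have hn5 : n = 5 := by
        by_contra hne
        have h6 := H_mono4 9 (kTwo 5 n) n 6 (by omega) hH
        rw [v3] at h6
        omega
      subst hn5
      rw [hk10] at hw ⊢
      rw [v2]
      exact main5_small f hw hwsb
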